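/- Discrete Doob theorem: Let T be a weakly continuous operator on M(Ω) with transition kernel k such that all k(x,·), x ∈ Ω, are mutually equivalent probability measures. If there exists an invariant probability measure μ (Tμ = μ), then for every finite signed measure ν, Tⁿν → ν(Ω)·μ in total variation norm as n → ∞. -/

import Mathlib

/-!
Invariance of `μ` and mutual equivalence of the measures `k x` give `k x ∼ μ` for all `x`. Let `Q` be
the reversed kernel, obtained by disintegrating `μ(dx) k(x, dy)` along `y` (`κ†μ` in Mathlib). Then `μ`
is `Q`-invariant, `Q y ∼ μ` for almost every `y`, and `T (f μ) = (Q f) μ`, where `Q f` denotes the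
function `y ↦ ∫ f dQ_y` (`kernel_withDensityᵥ`).

The heart of the matter is `tendsto_iterate_kInt`: for bounded `f` of mean zero, `‖Qⁿ f‖` in `L¹(μ)`
tends to `0`. The sequence of norms decreases to some `L`. Sequential Banach-Alaoglu in the dual of
`L¹(μ)`, tested against the densities `dQ_y/dμ`, gives a subsequence along which `Q^(n_j + 1) f`
converges almost everywhere, hence in `L¹(μ)`, to some bounded `g` (`exists_subseq_kInt`). Then
`∫ g dμ = 0` and `‖Q g‖ = ‖g‖ = L`. Equality in `|∫ g dQ_y| ≤ ∫ |g| dQ_y` for one `y` with `μ ≪ Q_y`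
makes `g` of constant sign almost everywhere, so `g = 0` and `L = 0` (`eq_zero_of_kInt_abs_eq`).

For a general signed measure `ν`, put `ρ = ν - ν(Ω) μ`. Then `T ρ = h μ` with `h` integrable of mean
zero. Replacing `h` by a bounded function of mean zero close to it in `L¹(μ)` costs little, uniformly
in `n`, because `T` is a contraction for the total variation (`totalVariation_kernel_le`).
-/

open MeasureTheory Topology Filter
open scoped NNReal ENNReal BoundedContinuousFunction

noncomputable def sInt {Ω : Type*} [MeasurableSpace Ω] (μ : SignedMeasure Ω) (f : Ω → ℝ) : ℝ :=
  (∫ x, f x ∂μ.toJordanDecomposition.posPart) - ∫ x, f x ∂μ.toJordanDecomposition.negPart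

def IsTransKernel {Ω : Type*} [MeasurableSpace Ω] (k : Ω → SignedMeasure Ω) : Prop :=
  ∀ A : Set Ω, MeasurableSet A → Measurable fun x => k x A

def IsBddKernel {Ω : Type*} [MeasurableSpace Ω] (k : Ω → SignedMeasure Ω) : Prop :=
  IsTransKernel k ∧ ∃ C : ℝ≥0, ∀ x, (k x).totalVariation Set.univ ≤ C

def GivenByKernel {Ω : Type*} [MeasurableSpace Ω]
    (T : SignedMeasure Ω →ₗ[ℝ] SignedMeasure Ω) (k : Ω → SignedMeasure Ω) : Prop :=
  ∀ (μ : SignedMeasure Ω) (A : Set Ω), MeasurableSet A → T μ A = sInt μ (fun x => k x A)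

def IsBdMeasurable {Ω : Type*} [MeasurableSpace Ω] (f : Ω → ℝ) : Prop :=
  Measurable f ∧ ∃ C : ℝ, ∀ x, |f x| ≤ C

instance totalVariation_isFiniteMeasure {Ω : Type*} [MeasurableSpace Ω] (μ : SignedMeasure Ω) :
    IsFiniteMeasure μ.totalVariation := by
  unfold SignedMeasure.totalVariation; infer_instance

open ProbabilityTheory

/-! ### Averaging against a kernel with an invariant measure -/

theorem integrable_of_bdd {Ω : Type*} [MeasurableSpace Ω] (μ : Measure Ω) [IsFiniteMeasure μ]
    {f : Ω → ℝ} {C : ℝ} (hf : Measurable f) (hC : ∀ x, |f x| ≤ C) : Integrable f μ :=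
  Integrable.of_bound hf.aestronglyMeasurable C (ae_of_all _ hC)

theorem kInt_measurable {Ω : Type*} [MeasurableSpace Ω] (Q : Kernel Ω Ω)
    {f : Ω → ℝ} (hf : Measurable f) : Measurable fun y => ∫ x, f x ∂Q y :=
  (hf.stronglyMeasurable.integral_kernel (κ := Q)).measurable

theorem kInt_bdd {Ω : Type*} [MeasurableSpace Ω] (Q : Kernel Ω Ω) [IsMarkovKernel Q]
    {f : Ω → ℝ} {C : ℝ} (hC : ∀ x, |f x| ≤ C) (y : Ω) : |∫ x, f x ∂Q y| ≤ C := by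
  simpa using norm_integral_le_of_norm_le_const (μ := Q y) (f := f) (C := C) (ae_of_all _ hC)

/-- If `μ` is `Q`-invariant, then `f` and its average `y ↦ ∫ f dQ_y` have the same `μ`-integral. -/
theorem kInt_integral {Ω : Type*} [MeasurableSpace Ω] (μ : Measure Ω) [IsFiniteMeasure μ]
    (Q : Kernel Ω Ω) [IsMarkovKernel Q] (hQ : μ.bind Q = μ)
    {f : Ω → ℝ} (hf : Integrable f μ) : ∫ y, ∫ x, f x ∂Q y ∂μ = ∫ x, f x ∂μ := by
  have h := Measure.integral_compProd (μ := μ) (κ := Q) (f := fun p : Ω × Ω => f p.2)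
  have hs : (μ ⊗ₘ Q).snd = μ := by rw [Measure.snd_compProd]; exact hQ
  have hi : Integrable (fun p : Ω × Ω => f p.2) (μ ⊗ₘ Q) := by
    rw [← hs] at hf
    exact hf.comp_measurable measurable_snd
  rw [← h hi]
  conv_rhs => rw [← hs]
  rw [Measure.snd, integral_map measurable_snd.aemeasurable]
  rw [← Measure.snd, hs]
  exact hf.aestronglyMeasurable

/-- Averaging against a kernel with invariant measure `μ` is a contraction of `L¹(μ)`. -/
theorem kInt_abs_le {Ω : Type*} [MeasurableSpace Ω] (μ : Measure Ω) [IsFiniteMeasure μ]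
    (Q : Kernel Ω Ω) [IsMarkovKernel Q] (hQ : μ.bind Q = μ)
    {f : Ω → ℝ} {C : ℝ} (hf : Measurable f) (hC : ∀ x, |f x| ≤ C) :
    ∫ y, |∫ x, f x ∂Q y| ∂μ ≤ ∫ x, |f x| ∂μ := by
  have hC' : ∀ x, |(|f x|)| ≤ C := by simpa using hC
  rw [← kInt_integral μ Q hQ (integrable_of_bdd μ hf hC).abs]
  refine integral_mono (integrable_of_bdd μ (kInt_measurable Q hf) (kInt_bdd Q hC)).abs
    (integrable_of_bdd μ (kInt_measurable Q hf.abs) (kInt_bdd Q hC')) fun y => ?_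
  exact abs_integral_le_integral_abs

/-- The contraction of `L¹(μ)` is strict on nonzero functions of mean zero: equality forces `g` to have
constant sign almost everywhere, and then mean zero forces `g = 0`. -/
theorem eq_zero_of_kInt_abs_eq {Ω : Type*} [MeasurableSpace Ω] (μ : Measure Ω)
    [IsProbabilityMeasure μ]
    (Q : Kernel Ω Ω) [IsMarkovKernel Q] (hQ : μ.bind Q = μ) (hac : ∀ᵐ y ∂μ, μ ≪ Q y)
    {g : Ω → ℝ} {C : ℝ} (hg : Measurable g) (hC : ∀ x, |g x| ≤ C) (h0 : ∫ x, g x ∂μ = 0)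
    (heq : ∫ y, |∫ x, g x ∂Q y| ∂μ = ∫ x, |g x| ∂μ) : ∫ x, |g x| ∂μ = 0 := by
  have hC' : ∀ x, |(|g x|)| ≤ C := by simpa using hC
  rw [← kInt_integral μ Q hQ (integrable_of_bdd μ hg hC).abs] at heq
  have hae := (integral_eq_iff_of_ae_le
    (integrable_of_bdd μ (kInt_measurable Q hg) (kInt_bdd Q hC)).abs
    (integrable_of_bdd μ (kInt_measurable Q hg.abs) (kInt_bdd Q hC'))
    (ae_of_all _ fun y => abs_integral_le_integral_abs)).1 heq
  -- A single `y` with `|∫ g dQ_y| = ∫ |g| dQ_y` fixes the sign of `g` up to `Q y`-null sets,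
  -- hence up to `μ`-null sets.
  obtain ⟨y, hy, hμ⟩ := (hae.and hac).exists
  have hi := integrable_of_bdd (Q y) hg hC
  simp only at hy
  rcases abs_choice (∫ x, g x ∂Q y) with h | h
  · rw [h, integral_eq_iff_of_ae_le hi hi.abs (ae_of_all _ fun x => le_abs_self _)] at hy
    have h1 : g =ᵐ[μ] fun x => |g x| := hμ.ae_le hy
    rw [← h0, integral_congr_ae h1]
  · rw [h, ← integral_neg] at hy
    have h1 : (fun x => -g x) =ᵐ[μ] fun x => |g x| :=
      hμ.ae_le ((integral_eq_iff_of_ae_le hi.neg hi.abs (ae_of_all _ fun x => neg_le_abs _)).1 hy)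
    rw [← integral_congr_ae h1, integral_neg, h0, neg_zero]

/-- A kernel absolutely continuous with respect to `μ` maps bounded sequences to sequences having an
almost everywhere convergent subsequence. -/
theorem exists_subseq_kInt {Ω : Type*} [MeasurableSpace Ω] [MeasurableSpace.CountablyGenerated Ω]
    (μ : Measure Ω) [IsProbabilityMeasure μ]
    (Q : Kernel Ω Ω) [IsMarkovKernel Q] (hac : ∀ᵐ y ∂μ, Q y ≪ μ)
    {f : ℕ → Ω → ℝ} {C : ℝ} (hf : ∀ n, Measurable (f n)) (hC : ∀ n x, |f n x| ≤ C) :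
    ∃ φ : ℕ → ℕ, StrictMono φ ∧ ∃ g : Ω → ℝ, Measurable g ∧ (∀ x, |g x| ≤ C) ∧
      ∀ᵐ y ∂μ, Tendsto (fun j => ∫ x, f (φ j) x ∂Q y) atTop (𝓝 (g y)) := by
  have hC0 : 0 ≤ C := by
    obtain ⟨x⟩ : Nonempty Ω := nonempty_of_isProbabilityMeasure μ
    exact (abs_nonneg _).trans (hC 0 x)
  have hint (n : ℕ) {p : Ω → ℝ} (hp : Integrable p μ) : Integrable (fun x => f n x * p x) μ :=
    hp.bdd_mul (hf n).aestronglyMeasurable (ae_of_all _ (hC n))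
  let Λ (n : ℕ) : Lp ℝ 1 μ →ₗ[ℝ] ℝ :=
    { toFun := fun p => ∫ x, f n x * p x ∂μ
      map_add' := fun p q => by
        rw [← integral_add (hint n (L1.integrable_coeFn p)) (hint n (L1.integrable_coeFn q))]
        refine integral_congr_ae ?_
        filter_upwards [Lp.coeFn_add p q] with x hx
        rw [hx, Pi.add_apply, mul_add]
      map_smul' := fun c p => by
        simp only [RingHom.id_apply, smul_eq_mul]
        rw [← integral_const_mul]
        refine integral_congr_ae ?_
        filter_upwards [Lp.coeFn_smul c p] with x hx
        rw [hx, Pi.smul_apply, smul_eq_mul]; ring }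
  have hΛ (n : ℕ) (p : Lp ℝ 1 μ) : ‖Λ n p‖ ≤ C * ‖p‖ := by
    rw [L1.norm_eq_integral_norm, ← integral_const_mul]
    refine norm_integral_le_of_norm_le ((L1.integrable_coeFn p).norm.const_mul C)
      (ae_of_all _ fun x => ?_)
    rw [norm_mul]
    exact mul_le_mul_of_nonneg_right (hC n x) (norm_nonneg _)
  let Φ (n : ℕ) : Lp ℝ 1 μ →L[ℝ] ℝ := (Λ n).mkContinuous C (hΛ n)
  have : Fact ((1 : ℝ≥0∞) ≠ ∞) := ⟨ENNReal.one_ne_top⟩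
  have hΦ (n : ℕ) : StrongDual.toWeakDual (Φ n) ∈
      (WeakDual.toStrongDual ⁻¹' Metric.closedBall (0 : StrongDual ℝ (Lp ℝ 1 μ)) C) := by
    simp only [Set.mem_preimage, mem_closedBall_zero_iff]
    exact LinearMap.mkContinuous_norm_le _ hC0 (hΛ n)
  -- Banach-Alaoglu; sequential because `L¹` is separable over a countably generated σ-algebra.
  obtain ⟨ψ, -, φ, hφ, hlim⟩ := WeakDual.isSeqCompact_closedBall ℝ (Lp ℝ 1 μ) 0 C hΦ
  -- Weak-star convergence is tested on the density of `Q y` with respect to `μ`.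
  have hconv : ∀ᵐ y ∂μ, ∃ l, Tendsto (fun j => ∫ x, f (φ j) x ∂Q y) atTop (𝓝 l) := by
    filter_upwards [hac] with y hy
    have hp : Integrable (fun x => ((Q y).rnDeriv μ x).toReal) μ :=
      Measure.integrable_toReal_rnDeriv
    refine ⟨ψ hp.toL1, ?_⟩
    have h1 := ((WeakDual.eval_continuous (hp.toL1)).tendsto ψ).comp hlim
    refine h1.congr fun j => ?_
    rw [← integral_rnDeriv_smul hy]
    refine integral_congr_ae ?_
    filter_upwards [hp.coeFn_toL1] with x hx
    rw [hx, smul_eq_mul, mul_comm]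
  obtain ⟨g, hg, hgl⟩ := measurable_limit_of_tendsto_metrizable_ae
    (fun j => (kInt_measurable Q (hf (φ j))).aemeasurable) hconv
  -- The limit is only bounded almost everywhere, so it is clamped to `[-C, C]`.
  refine ⟨φ, hφ, fun y => max (-C) (min C (g y)), by fun_prop, fun y => abs_le.2
    ⟨le_max_left _ _, max_le (by linarith) (min_le_left _ _)⟩, ?_⟩
  filter_upwards [hgl] with y hy
  have hb : |g y| ≤ C := le_of_tendsto' hy.abs fun j => kInt_bdd Q (hC _) y
  rw [min_eq_right (abs_le.1 hb).2, max_eq_right (abs_le.1 hb).1]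
  exact hy

/-- Bounded functions of mean zero converge to `0` in `L¹(μ)` under iteration of a kernel whose
measures are equivalent to its invariant measure `μ`. -/
theorem tendsto_iterate_kInt {Ω : Type*} [MeasurableSpace Ω]
    [MeasurableSpace.CountablyGenerated Ω] (μ : Measure Ω) [IsProbabilityMeasure μ]
    (Q : Kernel Ω Ω) [IsMarkovKernel Q] (hQ : μ.bind Q = μ)
    (hac : ∀ᵐ y ∂μ, Q y ≪ μ) (hac' : ∀ᵐ y ∂μ, μ ≪ Q y)
    {f : ℕ → Ω → ℝ} {C : ℝ} (hf : ∀ n, Measurable (f n)) (hC : ∀ n x, |f n x| ≤ C)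
    (hstep : ∀ n, f (n + 1) = fun y => ∫ x, f n x ∂Q y) (h0 : ∫ x, f 0 x ∂μ = 0) :
    Tendsto (fun n => ∫ x, |f n x| ∂μ) atTop (𝓝 0) := by
  have hfi (n) : Integrable (f n) μ := integrable_of_bdd μ (hf n) (hC n)
  have hanti : Antitone fun n => ∫ x, |f n x| ∂μ := antitone_nat_of_succ_le fun n => by
    rw [hstep]; exact kInt_abs_le μ Q hQ (hf n) (hC n)
  have hmean (n) : ∫ x, f n x ∂μ = 0 := by
    induction n with
    | zero => exact h0
    | succ n ih => rw [hstep, kInt_integral μ Q hQ (hfi n), ih]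
  obtain ⟨L, hL⟩ : ∃ L, Tendsto (fun n => ∫ x, |f n x| ∂μ) atTop (𝓝 L) :=
    ⟨_, tendsto_atTop_ciInf hanti ⟨0, by
      rintro _ ⟨n, rfl⟩; exact integral_nonneg fun x => abs_nonneg _⟩⟩
  obtain ⟨φ, hφ, g, hg, hgC, hlim⟩ := exists_subseq_kInt μ Q hac hf hC
  simp only [← fun n y => congrFun (hstep n) y] at hlim
  have hgi := integrable_of_bdd μ hg hgC
  have hdiff : Tendsto (fun j => ∫ x, |f (φ j + 1) x - g x| ∂μ) atTop (𝓝 0) := by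
    have := tendsto_integral_of_dominated_convergence (μ := μ)
      (F := fun j x => |f (φ j + 1) x - g x|) (f := fun _ => 0) (fun _ => C + C)
      (fun j => ((hf _).sub hg).abs.aestronglyMeasurable) (integrable_const _)
      (fun j => ae_of_all _ fun x => by
        rw [Real.norm_eq_abs, abs_abs]
        exact (abs_sub _ _).trans (add_le_add (hC _ _) (hgC _)))
      (by
        filter_upwards [hlim] with x hx
        simpa using (hx.sub_const (g x)).abs)
    simpa using this
  have hshift (m : ℕ) : Tendsto (fun j => ∫ x, |f (φ j + m) x| ∂μ) atTop (𝓝 L) :=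
    hL.comp (tendsto_atTop_mono (fun j => Nat.le_add_right _ m) hφ.tendsto_atTop)
  have hnorm {u : ℕ → Ω → ℝ} {v : Ω → ℝ} (hu : ∀ j, Integrable (u j) μ) (hv : Integrable v μ)
      (h : Tendsto (fun j => ∫ x, |u j x - v x| ∂μ) atTop (𝓝 0)) :
      Tendsto (fun j => ∫ x, |u j x| ∂μ) atTop (𝓝 (∫ x, |v x| ∂μ)) := by
    rw [tendsto_iff_norm_sub_tendsto_zero]
    refine squeeze_zero (fun _ => norm_nonneg _) (fun j => ?_) h
    rw [← integral_sub (hu j).abs hv.abs]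
    refine (norm_integral_le_integral_norm _).trans
      (integral_mono ((hu j).abs.sub hv.abs).norm ((hu j).sub hv).abs fun x => ?_)
    exact abs_abs_sub_abs_le_abs_sub _ _
  have hgL : ∫ x, |g x| ∂μ = L :=
    tendsto_nhds_unique (hnorm (fun j => hfi _) hgi hdiff) (hshift 1)
  have hQgi := integrable_of_bdd μ (kInt_measurable Q hg) (kInt_bdd Q hgC)
  have hQgL : ∫ y, |∫ x, g x ∂Q y| ∂μ = L := by
    refine tendsto_nhds_unique (hnorm (u := fun j => f (φ j + 2)) (fun j => hfi _) hQgi ?_)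
      (hshift 2)
    refine squeeze_zero (fun _ => integral_nonneg fun _ => abs_nonneg _) (fun j => ?_) hdiff
    have := kInt_abs_le μ Q hQ ((hf (φ j + 1)).sub hg)
      (C := C + C) fun x => (abs_sub _ _).trans (add_le_add (hC _ _) (hgC _))
    refine le_trans (le_of_eq (integral_congr_ae (ae_of_all _ fun y => ?_))) this
    simp only [Pi.sub_apply]
    rw [integral_sub (integrable_of_bdd _ (hf _) (hC _)) (integrable_of_bdd _ hg hgC),
      ← congrFun (hstep (φ j + 1)) y]
  have hg0 : ∫ x, g x ∂μ = 0 := by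
    have h1 : Tendsto (fun j => ∫ x, f (φ j + 1) x ∂μ) atTop (𝓝 (∫ x, g x ∂μ)) := by
      rw [tendsto_iff_norm_sub_tendsto_zero]
      refine squeeze_zero (fun _ => norm_nonneg _) (fun j => ?_) hdiff
      rw [← integral_sub (hfi _) hgi]
      exact norm_integral_le_integral_norm _
    simp only [hmean] at h1
    exact tendsto_nhds_unique h1 tendsto_const_nhds
  have := eq_zero_of_kInt_abs_eq μ Q hQ hac' hg hgC hg0 (hQgL.trans hgL.symm)
  rwa [← hgL, this] at hL

/-! ### Total variation and action of a kernel on signed measures -/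

/-- The total variation of `ρ` is at most the supremum of `ρ A - ρ Aᶜ`, which a Hahn decomposition
attains. -/
theorem totalVariation_univ_le {Ω : Type*} [MeasurableSpace Ω] {ρ : SignedMeasure Ω} {C : ℝ}
    (h : ∀ A, MeasurableSet A → ρ A - ρ Aᶜ ≤ C) :
    (ρ.totalVariation Set.univ).toReal ≤ C := by
  obtain ⟨A, hA, hpos, hneg, h1, h2⟩ := ρ.toJordanDecomposition_spec
  refine le_trans (le_of_eq ?_) (h A hA)
  rw [SignedMeasure.totalVariation, Measure.add_apply, h1, h2,
    ENNReal.toReal_add (measure_ne_top _ _) (measure_ne_top _ _),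
    SignedMeasure.toMeasureOfZeroLE_apply _ _ _ MeasurableSet.univ,
    SignedMeasure.toMeasureOfLEZero_apply _ _ _ MeasurableSet.univ]
  simp [sub_eq_add_neg]

theorem sub_compl_le_totalVariation {Ω : Type*} [MeasurableSpace Ω] (ρ : SignedMeasure Ω)
    {A : Set Ω} (hA : MeasurableSet A) :
    ρ A - ρ Aᶜ ≤ (ρ.totalVariation Set.univ).toReal := by
  have h1 := (abs_le.1 (ρ.norm_le_totalVariation A)).2
  have h2 := (abs_le.1 (ρ.norm_le_totalVariation Aᶜ)).1
  have h3 := measureReal_add_measureReal_compl (μ := ρ.totalVariation) hA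
  rw [measureReal_def (s := Set.univ)] at h3
  linarith

theorem totalVariation_univ_add_le {Ω : Type*} [MeasurableSpace Ω] (ρ σ : SignedMeasure Ω) :
    ((ρ + σ).totalVariation Set.univ).toReal ≤
      (ρ.totalVariation Set.univ).toReal + (σ.totalVariation Set.univ).toReal :=
  totalVariation_univ_le fun A hA => by
    have h1 := sub_compl_le_totalVariation ρ hA
    have h2 := sub_compl_le_totalVariation σ hA
    simp only [FunLike.coe_add, Pi.add_apply]
    linarith

theorem totalVariation_withDensityᵥ_le {Ω : Type*} [MeasurableSpace Ω] {μ : Measure Ω}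
    {f : Ω → ℝ} (hf : Integrable f μ) :
    (SignedMeasure.totalVariation (μ.withDensityᵥ f) Set.univ).toReal ≤ ∫ x, |f x| ∂μ :=
  totalVariation_univ_le fun A hA => by
    rw [withDensityᵥ_apply hf hA, withDensityᵥ_apply hf hA.compl,
      ← integral_add_compl hA hf.abs, sub_eq_add_neg, ← integral_neg]
    exact add_le_add (integral_mono hf.integrableOn hf.abs.integrableOn fun x => le_abs_self _)
      (integral_mono hf.neg.integrableOn hf.abs.integrableOn fun x => neg_le_abs _)

/-- The value of `sInt` may be computed from any presentation of a signed measure as a difference of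
finite measures, not only from its Jordan decomposition. -/
theorem sInt_toSignedMeasure_sub {Ω : Type*} [MeasurableSpace Ω] (m₁ m₂ : Measure Ω)
    [IsFiniteMeasure m₁] [IsFiniteMeasure m₂] {g : Ω → ℝ} {C : ℝ} (hg : Measurable g)
    (hC : ∀ x, |g x| ≤ C) :
    sInt (m₁.toSignedMeasure - m₂.toSignedMeasure) g = ∫ x, g x ∂m₁ - ∫ x, g x ∂m₂ := by
  set ρ := m₁.toSignedMeasure - m₂.toSignedMeasure with hρ
  have hm : ρ.toJordanDecomposition.posPart + m₂ = ρ.toJordanDecomposition.negPart + m₁ := by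
    ext A hA
    have h1 := ρ.apply_eq_posPart_real_sub_negPart_real hA
    rw [hρ, Measure.toSignedMeasure_sub_apply hA, ← hρ] at h1
    rw [← ENNReal.toReal_eq_toReal_iff' (measure_ne_top _ _) (measure_ne_top _ _),
      ← measureReal_def, ← measureReal_def, measureReal_add_apply, measureReal_add_apply]
    linarith
  have := congrArg (fun m : Measure Ω => ∫ x, g x ∂m) hm
  rw [integral_add_measure (integrable_of_bdd _ hg hC) (integrable_of_bdd _ hg hC),
    integral_add_measure (integrable_of_bdd _ hg hC) (integrable_of_bdd _ hg hC)] at this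
  rw [sInt]
  linarith

theorem sInt_withDensityᵥ {Ω : Type*} [MeasurableSpace Ω] (μ : Measure Ω) [IsFiniteMeasure μ]
    {f g : Ω → ℝ} {C : ℝ} (hf : Measurable f) (hfi : Integrable f μ) (hg : Measurable g)
    (hC : ∀ x, |g x| ≤ C) :
    sInt (μ.withDensityᵥ f) g = ∫ x, f x * g x ∂μ := by
  have := isFiniteMeasure_withDensity_ofReal hfi.2
  have := isFiniteMeasure_withDensity_ofReal hfi.neg.2
  have h1 : μ.withDensityᵥ f =
      (μ.withDensity fun x => ENNReal.ofReal (f x)).toSignedMeasure -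
        (μ.withDensity fun x => ENNReal.ofReal ((-f) x)).toSignedMeasure :=
    withDensityᵥ_eq_withDensity_pos_part_sub_withDensity_neg_part hfi
  rw [h1, sInt_toSignedMeasure_sub _ _ hg hC,
    integral_withDensity_eq_integral_toReal_smul (by fun_prop) (by simp),
    integral_withDensity_eq_integral_toReal_smul (by fun_prop) (by simp)]
  simp only [ENNReal.toReal_ofReal', smul_eq_mul, Pi.neg_apply]
  rw [← integral_sub]
  · refine integral_congr_ae (ae_of_all _ fun x => ?_)
    simp only
    rw [← sub_mul, max_zero_sub_eq_self]
  · exact hfi.pos_part.mul_bdd hg.aestronglyMeasurable (ae_of_all _ hC)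
  · exact hfi.neg_part.mul_bdd hg.aestronglyMeasurable (ae_of_all _ hC)

/-- A Markov operator does not increase the total variation. -/
theorem totalVariation_kernel_le {Ω : Type*} [MeasurableSpace Ω] (κ : Kernel Ω Ω)
    [IsMarkovKernel κ] {ρ σ : SignedMeasure Ω}
    (hσ : ∀ A, MeasurableSet A → σ A = sInt ρ fun x => (κ x A).toReal) :
    (σ.totalVariation Set.univ).toReal ≤ (ρ.totalVariation Set.univ).toReal :=
  totalVariation_univ_le fun A hA => by
    have hm {B : Set Ω} (hB : MeasurableSet B) : Measurable fun x => (κ x B).toReal :=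
      (κ.measurable_coe hB).ennreal_toReal
    have hb (B : Set Ω) (x : Ω) : |(κ x B).toReal| ≤ 1 := by
      rw [abs_of_nonneg ENNReal.toReal_nonneg]
      exact measureReal_le_one
    have hd (x : Ω) : ‖(κ x A).toReal - (κ x Aᶜ).toReal‖ ≤ 1 := by
      have h1 := measureReal_add_measureReal_compl (μ := κ x) hA
      have h2 : 0 ≤ (κ x).real A := measureReal_nonneg
      have h3 : 0 ≤ (κ x).real Aᶜ := measureReal_nonneg
      simp only [measureReal_def, measure_univ, ENNReal.toReal_one] at h1 h2 h3
      exact abs_le.2 ⟨by linarith, by linarith⟩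
    rw [hσ A hA, hσ _ hA.compl, sInt, sInt, SignedMeasure.totalVariation, Measure.add_apply,
      ENNReal.toReal_add (measure_ne_top _ _) (measure_ne_top _ _)]
    have key (m : Measure Ω) [IsFiniteMeasure m] :
        |∫ x, (κ x A).toReal ∂m - ∫ x, (κ x Aᶜ).toReal ∂m| ≤ (m Set.univ).toReal := by
      rw [← integral_sub (integrable_of_bdd m (hm hA) (hb A))
        (integrable_of_bdd m (hm hA.compl) (hb Aᶜ))]
      simpa [measureReal_def] using norm_integral_le_of_norm_le_const (μ := m) (ae_of_all _ hd)
    have k1 := (abs_le.1 (key ρ.toJordanDecomposition.posPart)).2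
    have k2 := (abs_le.1 (key ρ.toJordanDecomposition.negPart)).1
    linarith

/-- The action of `κ` on measures with a `μ`-density is, on densities, averaging against the reversed
kernel `Q`. -/
theorem kernel_withDensityᵥ {Ω : Type*} [MeasurableSpace Ω] (μ : Measure Ω) [IsFiniteMeasure μ]
    (κ Q : Kernel Ω Ω) [IsMarkovKernel κ] [IsMarkovKernel Q]
    (hQ : μ ⊗ₘ Q = (μ ⊗ₘ κ).map Prod.swap)
    {f : Ω → ℝ} {C : ℝ} (hf : Measurable f) (hC : ∀ x, |f x| ≤ C)
    {A : Set Ω} (hA : MeasurableSet A) :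
    (sInt (μ.withDensityᵥ f) fun x => (κ x A).toReal)
      = μ.withDensityᵥ (fun y => ∫ x, f x ∂Q y) A := by
  have hm : Measurable fun x => (κ x A).toReal := (κ.measurable_coe hA).ennreal_toReal
  rw [sInt_withDensityᵥ μ (C := 1) hf (integrable_of_bdd μ hf hC) hm (fun x => by
      rw [abs_of_nonneg ENNReal.toReal_nonneg]; exact measureReal_le_one),
    withDensityᵥ_apply (integrable_of_bdd μ (kInt_measurable Q hf) (kInt_bdd Q hC)) hA]
  -- Both sides are the integral of `f x` over `y ∈ A` against the joint law `μ(dx) κ(x, dy)`.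
  let F : Ω × Ω → ℝ := fun p => A.indicator 1 p.1 * f p.2
  have hF : Measurable F :=
    ((measurable_one.indicator hA).comp measurable_fst).mul (hf.comp measurable_snd)
  have hFC (p) : |F p| ≤ C := by
    have h0 : 0 ≤ C := (abs_nonneg _).trans (hC p.2)
    by_cases h : p.1 ∈ A <;> simp [F, h, hC, h0]
  have h1 : ∫ p, F p ∂(μ ⊗ₘ Q) = ∫ y in A, ∫ x, f x ∂Q y ∂μ := by
    rw [Measure.integral_compProd (integrable_of_bdd _ hF hFC), ← integral_indicator hA]
    refine integral_congr_ae (ae_of_all _ fun y => ?_)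
    by_cases h : y ∈ A <;> simp [F, h]
  have h2 : ∫ p, F p ∂(μ ⊗ₘ Q) = ∫ x, f x * (κ x A).toReal ∂μ := by
    rw [hQ, integral_map measurable_swap.aemeasurable hF.aestronglyMeasurable,
      Measure.integral_compProd (integrable_of_bdd (f := fun p : Ω × Ω => F p.swap) _
        (hF.comp measurable_swap) fun p => hFC _)]
    refine integral_congr_ae (ae_of_all _ fun x => ?_)
    simp only [F, Prod.fst_swap, Prod.snd_swap]
    rw [integral_mul_const, integral_indicator_one hA, mul_comm, measureReal_def]
  rw [← h1, h2]

/-- If every `κ x` is equivalent to `μ`, then so are almost all measures of the reversed kernel, since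
`μ ⊗ Q` is equivalent to the product measure `μ × μ`. -/
theorem ae_absolutelyContinuous_of_swap {Ω : Type*} [MeasurableSpace Ω]
    [MeasurableSpace.CountablyGenerated Ω] (μ : Measure Ω) [IsFiniteMeasure μ]
    (κ Q : Kernel Ω Ω) [IsMarkovKernel κ] [IsMarkovKernel Q]
    (hQ : μ ⊗ₘ Q = (μ ⊗ₘ κ).map Prod.swap) (h₁ : ∀ x, κ x ≪ μ) (h₂ : ∀ x, μ ≪ κ x) :
    (∀ᵐ y ∂μ, Q y ≪ μ) ∧ ∀ᵐ y ∂μ, μ ≪ Q y := by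
  constructor
  · have h : μ ⊗ₘ Q ≪ μ ⊗ₘ Kernel.const Ω μ := by
      rw [hQ, Measure.compProd_const, ← Measure.prod_swap, ← Measure.compProd_const]
      refine (Measure.AbsolutelyContinuous.compProd_right ?_).map measurable_swap
      exact ae_of_all _ h₁
    simpa using h.kernel_of_compProd
  · have h : μ ⊗ₘ Kernel.const Ω μ ≪ μ ⊗ₘ Q := by
      rw [hQ, Measure.compProd_const, ← Measure.prod_swap, ← Measure.compProd_const]
      refine (Measure.AbsolutelyContinuous.compProd_right ?_).map measurable_swap
      exact ae_of_all _ h₂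
    simpa using h.kernel_of_compProd

/-! ### Convergence -/

theorem stmt19 {Ω : Type*} [TopologicalSpace Ω] [PolishSpace Ω] [MeasurableSpace Ω] [BorelSpace Ω]
    (k : Ω → Measure Ω) (hprob : ∀ x, IsProbabilityMeasure (k x))
    (hmeas : ∀ A : Set Ω, MeasurableSet A → Measurable fun x => k x A)
    (heq : ∀ x y : Ω, k x ≪ k y)
    (T : SignedMeasure Ω →ₗ[ℝ] SignedMeasure Ω)
    (hT : ∀ (ν : SignedMeasure Ω) (A : Set Ω), MeasurableSet A →
      T ν A = sInt ν fun x => (k x A).toReal)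
    (μ : Measure Ω) [IsProbabilityMeasure μ]
    (hinv : ∀ A : Set Ω, MeasurableSet A → ∫⁻ x, k x A ∂μ = μ A) :
    ∀ ν : SignedMeasure Ω,
      Tendsto (fun n : ℕ =>
          (((T ^ n) ν - ν Set.univ • μ.toSignedMeasure).totalVariation Set.univ).toReal)
        atTop (𝓝 0) := by
  intro ν
  have hΩ : Nonempty Ω := nonempty_of_isProbabilityMeasure μ
  let κ : Kernel Ω Ω := ⟨k, Measure.measurable_of_measurable_coe k hmeas⟩
  have hκ : IsMarkovKernel κ := ⟨hprob⟩
  have hκμ : κ ∘ₘ μ = μ := by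
    ext A hA
    rw [Measure.bind_apply hA κ.aemeasurable]
    exact hinv A hA
  have hkμ (x) : k x ≪ μ := Measure.AbsolutelyContinuous.mk fun A hA h0 => by
    rw [← hinv A hA, lintegral_eq_zero_iff (hmeas A hA)] at h0
    obtain ⟨y, hy⟩ := h0.exists
    exact heq x y hy
  have hμk (x) : μ ≪ k x := Measure.AbsolutelyContinuous.mk fun A hA h0 => by
    rw [← hinv A hA]
    simp [fun y => heq y x h0]
  -- The reversed chain: the disintegration of `μ(dx) k(x, dy)` along `y`.
  obtain ⟨Q, hQm, hQ⟩ : ∃ Q : Kernel Ω Ω, IsMarkovKernel Q ∧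
      μ ⊗ₘ Q = (μ ⊗ₘ κ).map Prod.swap := by
    refine ⟨κ†μ, inferInstance, ?_⟩
    have := compProd_posterior_eq_map_swap (κ := κ) (μ := μ)
    rwa [hκμ] at this
  have hQμ : μ.bind Q = μ := by
    rw [← Measure.snd_compProd, hQ, Measure.snd_map_swap, Measure.fst_compProd]
  obtain ⟨hac, hac'⟩ := ae_absolutelyContinuous_of_swap μ κ Q hQ hkμ hμk
  have hcontr (n : ℕ) (ρ : SignedMeasure Ω) :
      (((T ^ n) ρ).totalVariation Set.univ).toReal ≤ (ρ.totalVariation Set.univ).toReal := by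
    induction n with
    | zero => simp
    | succ n ih =>
      rw [pow_succ', Module.End.mul_apply]
      exact (totalVariation_kernel_le κ (hT _)).trans ih
  have hkm {A : Set Ω} (hA : MeasurableSet A) : Measurable fun x => (k x A).toReal :=
    (hmeas A hA).ennreal_toReal
  have hk1 (A : Set Ω) (x : Ω) : |(k x A).toReal| ≤ 1 := by
    rw [abs_of_nonneg ENNReal.toReal_nonneg]
    exact measureReal_le_one (μ := k x)
  have hTμ : T μ.toSignedMeasure = μ.toSignedMeasure := by
    ext A hA
    have h0 : μ.toSignedMeasure = μ.toSignedMeasure - (0 : Measure Ω).toSignedMeasure := by simp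
    rw [hT _ A hA]
    conv_lhs => rw [h0]
    rw [sInt_toSignedMeasure_sub _ _ (hkm hA) (hk1 A), integral_zero_measure, sub_zero,
      integral_toReal (hmeas A hA).aemeasurable (ae_of_all _ fun x => measure_lt_top _ _),
      hinv A hA, Measure.toSignedMeasure_apply_measurable hA, measureReal_def]
  have hTnμ (n : ℕ) : (T ^ n) μ.toSignedMeasure = μ.toSignedMeasure := by
    induction n with
    | zero => simp
    | succ n ih => rw [pow_succ, Module.End.mul_apply, hTμ, ih]
  set ρ := ν - ν Set.univ • μ.toSignedMeasure with hρ
  have hTn (n : ℕ) : (T ^ n) ν - ν Set.univ • μ.toSignedMeasure = (T ^ n) ρ := by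
    rw [hρ, map_sub, map_smul, hTnμ]
  simp only [hTn]
  have hρ0 : ρ Set.univ = 0 := by
    simp [hρ]
  -- Every `k x` is absolutely continuous with respect to `μ`, hence so is `T ρ`.
  obtain ⟨h, hhi, hTρ⟩ : ∃ h : Ω → ℝ, Integrable h μ ∧ T ρ = μ.withDensityᵥ h := by
    refine ⟨(T ρ).rnDeriv μ, SignedMeasure.integrable_rnDeriv _ _, Eq.symm ?_⟩
    rw [← SignedMeasure.absolutelyContinuous_iff_withDensityᵥ_rnDeriv_eq]
    refine VectorMeasure.AbsolutelyContinuous.mk fun A hA h0 => ?_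
    rw [Measure.toENNRealVectorMeasure_apply_measurable hA] at h0
    rw [hT _ A hA]
    simp [sInt, fun x => hkμ x h0]
  have hh0 : ∫ x, h x ∂μ = 0 := by
    have h1 : T ρ Set.univ = 0 := by
      rw [hT _ _ MeasurableSet.univ]
      simp only [measure_univ, ENNReal.toReal_one, sInt, integral_const, smul_eq_mul, mul_one]
      rw [← ρ.apply_eq_posPart_real_sub_negPart_real MeasurableSet.univ, hρ0]
    rw [hTρ, withDensityᵥ_apply hhi MeasurableSet.univ] at h1
    simpa using h1
  rw [← tendsto_add_atTop_iff_nat 1]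
  simp only [pow_succ, Module.End.mul_apply, hTρ]
  refine Metric.tendsto_atTop.2 fun ε hε => ?_
  let := TopologicalSpace.upgradeIsCompletelyMetrizable Ω
  obtain ⟨u, hu, hui⟩ := hhi.exists_boundedContinuous_integral_sub_le (ε := ε / 4) (by positivity)
  set c := ∫ x, u x ∂μ with hc
  have hcε : |c| ≤ ε / 4 := by
    have : -c = ∫ x, (h x - u x) ∂μ := by rw [integral_sub hhi hui, hh0, zero_sub]
    rw [← abs_neg, this]
    exact (norm_integral_le_integral_norm _).trans hu
  have hum : Measurable fun x => u x - c := u.continuous.measurable.sub_const c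
  have huC (x) : |u x - c| ≤ ‖u‖ + |c| :=
    (abs_sub _ _).trans (add_le_add_left (u.norm_coe_le_norm x) _)
  -- Iterates under the reversed kernel of the recentred approximation `u - c` of `h`.
  let f : ℕ → Ω → ℝ := fun n => Nat.rec (fun x => u x - c) (fun _ g y => ∫ x, g x ∂Q y) n
  have hf (n) : Measurable (f n) := by
    induction n with
    | zero => exact hum
    | succ n ih => exact kInt_measurable Q ih
  have hfC (n) : ∀ x, |f n x| ≤ ‖u‖ + |c| := by
    induction n with
    | zero => exact huC
    | succ n ih => exact kInt_bdd Q ih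
  have hTf (n) : (T ^ n) (μ.withDensityᵥ (f 0)) = μ.withDensityᵥ (f n) := by
    induction n with
    | zero => simp
    | succ n ih =>
      rw [pow_succ', Module.End.mul_apply, ih]
      ext A hA
      rw [hT _ A hA]
      exact kernel_withDensityᵥ μ κ Q hQ (hf n) (hfC n) hA
  have hlim := tendsto_iterate_kInt μ Q hQμ hac hac' hf hfC (fun n => rfl) (by
    change ∫ x, (u x - c) ∂μ = 0
    rw [integral_sub hui (integrable_const _)]
    simp [hc])
  obtain ⟨N, hN⟩ := Metric.tendsto_atTop.1 hlim (ε / 4) (by positivity)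
  refine ⟨N, fun n hn => ?_⟩
  have hfi (n) : Integrable (f n) μ := integrable_of_bdd μ (hf n) (hfC n)
  have hsplit : μ.withDensityᵥ h = μ.withDensityᵥ (h - f 0) + μ.withDensityᵥ (f 0) := by
    rw [← withDensityᵥ_add (hhi.sub (hfi 0)) (hfi 0), sub_add_cancel]
  have hni : Integrable (fun x => ‖h x - u x‖) μ := (hhi.sub hui).norm
  have hrest : ∫ x, |(h - f 0) x| ∂μ ≤ ε / 2 := by
    have h1 : ∫ x, |(h - f 0) x| ∂μ ≤ ∫ x, (‖h x - u x‖ + |c|) ∂μ := by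
      refine integral_mono (hhi.sub (hfi 0)).abs
        (hni.add (integrable_const _)) fun x => ?_
      have : (h - f 0) x = (h x - u x) + c := by
        change h x - (u x - c) = _
        ring
      simp only [this]
      exact abs_add_le _ _
    rw [integral_add hni (integrable_const _)] at h1
    simp only [integral_const, probReal_univ, one_smul] at h1
    linarith
  have h1 := totalVariation_univ_add_le ((T ^ n) (μ.withDensityᵥ (h - f 0)))
    ((T ^ n) (μ.withDensityᵥ (f 0)))
  rw [← map_add, ← hsplit, hTf] at h1
  have h2 := hcontr n (μ.withDensityᵥ (h - f 0))
  have h3 := totalVariation_withDensityᵥ_le (hhi.sub (hfi 0))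
  have h4 := totalVariation_withDensityᵥ_le (hfi n)
  have h5 := hN n hn
  rw [Real.dist_eq, sub_zero] at h5 ⊢
  rw [abs_of_nonneg ENNReal.toReal_nonneg]
  have h6 := (abs_lt.1 h5).2
  linarith
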